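/- Let q ≡ 1 (mod 5) be a prime power, t = (q-1)/5, and T a generator of the character group of F_q^×. Then ∑_{j=0}^{q-2} g(T^j) g(T^{t+j}) g(T^{2t+j}) g(T^{3t+j}) g(T^{4t+j}) / g(T^{5j}) · T^{5j}(5λ) = q^2 · (∑_{j=0}^{q-2} T^{5j}(λ)) for λ ∈ F_q^×, and hence equals q^2(q-1) if λ^5 = 1 and 0 otherwise. -/

import Mathlib

/-!
Write `χ = T ^ t`, a character of order five, and `ρ = T ^ j`. The numerator of the `j`-th summand
is `∏_{i < 5} g(ρ χ ^ i)`, which the Hasse-Davenport product formula (`hasse_davenport_five`)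
evaluates as `q ^ 2 ρ⁻⁵(5) g(ρ ^ 5)`. Since `g(ρ ^ 5) ≠ 0`, the summand equals `q ^ 2 (T ^ (5 * j))(lam)`,
and the sum over `j` is geometric with ratio `T(lam ^ 5)`, a `(q - 1)`-th root of unity that is `1`
only when `lam ^ 5 = 1`.

The product formula is proved with L-functions over `F[X]`. For a multiplicative character `χ` and
a power sum `p_r` of the roots, `w(f) = χ(product of the roots of f) ψ(p_r(f))` is multiplicative on
monic polynomials, so the series `L(u) = ∑ w(f) u ^ deg f` has an Euler product (`mul_lCoeff`).
Grouping the elements of the extension of degree `k` by their minimal polynomials shows that the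
coefficient of `u ^ k` in `u L' / L` is `∑_x χ(N x) ψ(Tr x ^ r)` over that extension (`lLog_weight`).

For `r = 1` the series is `1 + g(χ) u`. For `r = 5` and the character `ρ ^ 5`, the substitution
`x = y ^ 5` turns each logarithmic coefficient into the sum of those for `r = 1` and the five
characters `ρ χ ^ i` (`lLog_psumFive`). Hence `L = ∏ (1 + g(ρ χ ^ i) u)`, and its coefficient of
`u ^ 5` is the product of the five Gauss sums (`prod_gaussSum_eq_lCoeff`; only the coefficients up
to degree five are needed). The same coefficient can be computed directly as a sum over quintics:
the constant term of a quintic occurs in `p_5` only linearly, so the sum is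
`c · (ρ ^ 5)⁻¹(5) g(ρ ^ 5)` with `c` independent of `ρ` (`exists_lCoeff_five`). Taking `ρ = 1` and
using `g(χ) g(χ⁻¹) = q` gives `c = q ^ 2`.
-/

/-! ### The Euler product over monic polynomials -/

section Monics

open Polynomial

variable {F : Type*} [Field F] [Fintype F]

open Classical in
/-- The finite set of monic polynomials of degree `n` over a finite field. -/
noncomputable def monics (F : Type*) [Field F] [Fintype F] (n : ℕ) : Finset F[X] :=
  Finset.univ.image fun a : Fin n → F => X ^ n + ∑ i : Fin n, C (a i) * X ^ (i : ℕ)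

omit [Fintype F] in
theorem degree_tail_lt {n : ℕ} (a : Fin n → F) :
    (∑ i : Fin n, C (a i) * X ^ (i : ℕ)).degree < (n : WithBot ℕ) := by
  refine (Polynomial.degree_sum_le _ _).trans_lt ?_
  refine (Finset.sup_lt_iff (WithBot.bot_lt_coe n)).2 fun i _ => ?_
  exact (degree_C_mul_X_pow_le _ _).trans_lt (WithBot.coe_lt_coe.2 i.2)

omit [Fintype F] in
theorem coeff_tail {n : ℕ} (a : Fin n → F) (i : Fin n) :
    (X ^ n + ∑ i : Fin n, C (a i) * X ^ (i : ℕ)).coeff i = a i := by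
  have h : (i : ℕ) ≠ n := i.2.ne
  simp only [coeff_add, coeff_X_pow, h, if_false, zero_add, finsetSum_coeff, coeff_C_mul]
  rw [Finset.sum_eq_single i]
  · simp
  · intro b _ hb
    rw [if_neg (fun e => hb (Fin.ext e.symm)), mul_zero]
  · simp

omit [Fintype F] in
theorem tail_injective (n : ℕ) :
    Function.Injective fun a : Fin n → F => X ^ n + ∑ i : Fin n, C (a i) * X ^ (i : ℕ) := by
  intro a b hab
  funext i
  have := congrArg (fun f : F[X] => f.coeff i) hab
  simpa only [coeff_tail] using this

theorem mem_monics {n : ℕ} {f : F[X]} : f ∈ monics F n ↔ f.Monic ∧ f.natDegree = n := by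
  classical
  simp only [monics, Finset.mem_image, Finset.mem_univ, true_and]
  constructor
  · rintro ⟨a, rfl⟩
    exact ⟨monic_X_pow_add (degree_tail_lt a),
      natDegree_eq_of_degree_eq_some (by
        rw [degree_add_eq_left_of_degree_lt] <;> simp [degree_tail_lt a])⟩
  · rintro ⟨hf, rfl⟩
    refine ⟨fun i => f.coeff i, ?_⟩
    conv_rhs => rw [hf.as_sum]
    rw [Finset.sum_range]

theorem sum_monics {n : ℕ} (h : F[X] → ℂ) :
    ∑ f ∈ monics F n, h f =
      ∑ a : Fin n → F, h (X ^ n + ∑ i : Fin n, C (a i) * X ^ (i : ℕ)) := by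
  classical
  rw [monics, Finset.sum_image (fun a _ b _ hab => tail_injective n hab)]

open Classical in
/-- The finite set of monic irreducible polynomials of degree at most `n`. -/
noncomputable def irreds (F : Type*) [Field F] [Fintype F] (n : ℕ) : Finset F[X] :=
  {P ∈ (Finset.range (n + 1)).biUnion (monics F) | Irreducible P}

theorem mem_irreds {n : ℕ} {P : F[X]} :
    P ∈ irreds F n ↔ P.Monic ∧ Irreducible P ∧ P.natDegree ≤ n := by
  simp only [irreds, Finset.mem_filter, Finset.mem_biUnion, Finset.mem_range, mem_monics]
  constructor
  · rintro ⟨⟨a, h, h1, h2⟩, h3⟩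
    exact ⟨h1, h3, by omega⟩
  · rintro ⟨h1, h2, h3⟩
    exact ⟨⟨_, by omega, h1, rfl⟩, h2⟩

open Classical in
/-- Summing `deg P` over the prime powers `P ^ j`, `j ≥ 1`, that divide a monic `f` gives `deg f`
(the polynomial form of `∑_{d ∣ n} Λ(d) = log n`). -/
theorem sum_natDegree_irreds {n : ℕ} {f : F[X]} (hf : f ∈ monics F n) :
    ∑ P ∈ irreds F n, ∑ j ∈ Finset.Icc 1 n, (if P ^ j ∣ f then P.natDegree else 0) = n := by
  obtain ⟨hm, hd⟩ := mem_monics.1 hf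
  have h0 := hm.ne_zero
  let s := UniqueFactorizationMonoid.normalizedFactors f
  have hcount : ∀ P ∈ irreds F n,
      ∑ j ∈ Finset.Icc 1 n, (if P ^ j ∣ f then P.natDegree else 0)
        = s.count P * P.natDegree := by
    intro P hP
    obtain ⟨hPm, hPi, hPd⟩ := mem_irreds.1 hP
    have hem := UniqueFactorizationMonoid.emultiplicity_eq_count_normalizedFactors hPi h0
    rw [hPm.normalize_eq_self] at hem
    have hdvd : ∀ j, P ^ j ∣ f ↔ j ≤ s.count P := by
      intro j
      rw [pow_dvd_iff_le_emultiplicity, hem]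
      exact_mod_cast Iff.rfl
    have hle : s.count P ≤ n := by
      have h1 := natDegree_le_of_dvd ((hdvd _).2 le_rfl) h0
      rw [hPm.natDegree_pow, hd] at h1
      exact (Nat.le_mul_of_pos_right _ hPi.natDegree_pos).trans h1
    rw [← Finset.sum_filter, Finset.sum_const, smul_eq_mul]
    congr 1
    have : {j ∈ Finset.Icc 1 n | P ^ j ∣ f} = Finset.Icc 1 (s.count P) := by
      ext j
      simp only [Finset.mem_filter, Finset.mem_Icc, hdvd]
      omega
    rw [this]; simp
  rw [Finset.sum_congr rfl hcount]
  have hmem : ∀ P ∈ s, P.Monic ∧ Irreducible P := by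
    intro P hP
    have hi := UniqueFactorizationMonoid.irreducible_of_normalized_factor P hP
    refine ⟨?_, hi⟩
    rw [← UniqueFactorizationMonoid.normalize_normalized_factor P hP]
    exact monic_normalize hi.ne_zero
  have hsum : (s.map natDegree).sum = n := by
    rw [← natDegree_multiset_prod_of_monic s (fun P hP => (hmem P hP).1), ← hd]
    exact natDegree_eq_of_degree_eq (degree_eq_degree_of_associated
      (UniqueFactorizationMonoid.prod_normalizedFactors h0))
  rw [Finset.sum_multiset_map_count] at hsum
  rw [← hsum]
  symm
  apply Finset.sum_subset
  · intro P hP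
    rw [Multiset.mem_toFinset] at hP
    refine mem_irreds.2 ⟨(hmem P hP).1, (hmem P hP).2, ?_⟩
    refine le_of_le_of_eq ?_ (hd.trans hsum.symm)
    exact natDegree_le_of_dvd (UniqueFactorizationMonoid.dvd_of_mem_normalizedFactors hP) h0
  · intro P _ hP
    rw [Multiset.mem_toFinset] at hP
    simp [Multiset.count_eq_zero_of_notMem hP]

/-- A function on polynomials that is completely multiplicative on the monic ones. -/
structure IsWeight (w : F[X] → ℂ) : Prop where
  map_one : w 1 = 1
  map_mul : ∀ f g : F[X], f.Monic → g.Monic → w (f * g) = w f * w g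

omit [Fintype F] in
theorem IsWeight.map_pow {w : F[X] → ℂ} (hw : IsWeight w) {f : F[X]} (hf : f.Monic) (n : ℕ) :
    w (f ^ n) = w f ^ n := by
  induction n with
  | zero => simp [hw.map_one]
  | succ n ih => rw [pow_succ, hw.map_mul _ _ (hf.pow n) hf, ih, pow_succ]

/-- The coefficient of `u ^ n` in the L-function `∑ w(f) u ^ deg f`. -/
noncomputable def lCoeff (w : F[X] → ℂ) (n : ℕ) : ℂ := ∑ f ∈ monics F n, w f

/-- The coefficient of `u ^ k` in `u L'(u) / L(u)`, where `L` is the L-function of a weight `w`: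
a sum over the prime powers `P ^ j` of degree `k`, the term of `P ^ j` being `deg P * w(P) ^ j`. -/
noncomputable def lLog (w : F[X] → ℂ) (k : ℕ) : ℂ :=
  ∑ P ∈ irreds F k with P.natDegree ∣ k, (P.natDegree : ℂ) * w P ^ (k / P.natDegree)

open Classical in
theorem sum_monics_dvd {w : F[X] → ℂ} (hw : IsWeight w) {P : F[X]} (hP : P.Monic) (n : ℕ) :
    ∑ f ∈ monics F n with P ∣ f, w f =
      if P.natDegree ≤ n then w P * lCoeff w (n - P.natDegree) else 0 := by
  split_ifs with h
  · rw [lCoeff, Finset.mul_sum]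
    symm
    refine Finset.sum_bij (fun g _ => P * g) ?_ ?_ ?_ ?_
    · intro g hg
      obtain ⟨hm, hd⟩ := mem_monics.1 hg
      simp only [Finset.mem_filter, mem_monics, dvd_mul_right, and_true]
      exact ⟨hP.mul hm, by rw [hP.natDegree_mul hm]; omega⟩
    · intro a _ b _ hab
      exact mul_left_cancel₀ hP.ne_zero hab
    · intro f hf
      simp only [Finset.mem_filter, mem_monics] at hf
      obtain ⟨⟨hm, hd⟩, g, rfl⟩ := hf
      have hg := hP.of_mul_monic_left hm
      refine ⟨g, mem_monics.2 ⟨hg, ?_⟩, rfl⟩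
      rw [hP.natDegree_mul hg] at hd
      omega
    · intro g hg
      exact (hw.map_mul _ _ hP (mem_monics.1 hg).1).symm
  · apply Finset.sum_eq_zero
    intro f hf
    simp only [Finset.mem_filter, mem_monics] at hf
    obtain ⟨⟨hm, hd⟩, hf⟩ := hf
    exact absurd (hd ▸ natDegree_le_of_dvd hf hm.ne_zero) h

/-- The Euler product, in logarithmic form: `u L' = (u L' / L) L`, coefficient by coefficient.
Write `n = deg f` as a sum over the prime powers dividing `f`, and exchange the two sums. -/
theorem mul_lCoeff {w : F[X] → ℂ} (hw : IsWeight w) (n : ℕ) :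
    (n : ℂ) * lCoeff w n = ∑ k ∈ Finset.Icc 1 n, lLog w k * lCoeff w (n - k) := by
  classical
  have h1 : (n : ℂ) * lCoeff w n = ∑ P ∈ irreds F n, ∑ j ∈ Finset.Icc 1 n,
      (P.natDegree : ℂ) * ∑ f ∈ monics F n with P ^ j ∣ f, w f := by
    rw [lCoeff, Finset.mul_sum]
    have : ∀ f ∈ monics F n, (n : ℂ) * w f = ∑ P ∈ irreds F n, ∑ j ∈ Finset.Icc 1 n,
        (P.natDegree : ℂ) * (if P ^ j ∣ f then w f else 0) := by
      intro f hf
      have := congrArg (Nat.cast (R := ℂ)) (sum_natDegree_irreds hf)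
      rw [← this]
      push_cast
      simp only [Finset.sum_mul, ite_mul, zero_mul, mul_ite, mul_zero]
    rw [Finset.sum_congr rfl this, Finset.sum_comm]
    refine Finset.sum_congr rfl fun P _ => ?_
    rw [Finset.sum_comm]
    refine Finset.sum_congr rfl fun j _ => ?_
    rw [Finset.sum_filter, Finset.mul_sum]
  have h2 : ∀ k ∈ Finset.Icc 1 n, lLog w k * lCoeff w (n - k) = ∑ P ∈ irreds F n,
      if P.natDegree ∣ k then
        (P.natDegree : ℂ) * w P ^ (k / P.natDegree) * lCoeff w (n - k) else 0 := by
    intro k hk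
    rw [Finset.mem_Icc] at hk
    rw [lLog, Finset.sum_mul, ← Finset.sum_filter]
    refine Finset.sum_congr ?_ fun _ _ => rfl
    ext P
    simp only [Finset.mem_filter, mem_irreds]
    constructor
    · rintro ⟨⟨a, b, c⟩, d⟩; exact ⟨⟨a, b, c.trans hk.2⟩, d⟩
    · rintro ⟨⟨a, b, c⟩, d⟩; exact ⟨⟨a, b, Nat.le_of_dvd hk.1 d⟩, d⟩
  rw [h1, Finset.sum_congr rfl h2, Finset.sum_comm (s := Finset.Icc 1 n)]
  refine Finset.sum_congr rfl fun P hP => ?_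
  obtain ⟨hPm, hPi, hPd⟩ := mem_irreds.1 hP
  have hpos := hPi.natDegree_pos
  rw [← Finset.sum_filter]
  have h3 : ∀ j ∈ Finset.Icc 1 n, (P.natDegree : ℂ) * ∑ f ∈ monics F n with P ^ j ∣ f, w f =
      if j * P.natDegree ≤ n then
        (P.natDegree : ℂ) * w P ^ j * lCoeff w (n - j * P.natDegree) else 0 := by
    intro j _
    rw [sum_monics_dvd hw (hPm.pow j), hPm.natDegree_pow, hw.map_pow hPm]
    split_ifs <;> ring
  rw [Finset.sum_congr rfl h3, ← Finset.sum_filter]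
  refine Finset.sum_bij (fun j _ => j * P.natDegree) ?_ ?_ ?_ ?_
  · intro j hj
    simp only [Finset.mem_filter, Finset.mem_Icc] at hj ⊢
    exact ⟨⟨Nat.mul_pos hj.1.1 hpos, hj.2⟩, dvd_mul_left _ _⟩
  · intro a _ b _ hab
    exact Nat.eq_of_mul_eq_mul_right hpos hab
  · intro k hk
    simp only [Finset.mem_filter, Finset.mem_Icc] at hk
    obtain ⟨⟨hk1, hk2⟩, j, rfl⟩ := hk
    refine ⟨j, ?_, mul_comm _ _⟩
    simp only [Finset.mem_filter, Finset.mem_Icc]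
    refine ⟨⟨Nat.pos_of_mul_pos_left hk1, ?_⟩, by rwa [mul_comm]⟩
    exact (Nat.le_mul_of_pos_left _ hpos).trans hk2
  · intro j hj
    simp only [Nat.mul_div_cancel _ hpos]

end Monics

/-! ### Power sums of the roots and traces -/

section PowerSums

open Polynomial

/-- The sum of the roots of a monic polynomial, read off its coefficients. -/
noncomputable def psumOne {R : Type*} [CommRing R] (f : R[X]) : R := -f.reverse.coeff 1

/-- The sum of the fifth powers of the roots of a monic polynomial. This is Newton's formula
for `p₅` in the elementary symmetric functions `e k = (-1) ^ k * f.reverse.coeff k`; every term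
has weight five, so all the signs combine into the one in front. -/
noncomputable def psumFive {R : Type*} [CommRing R] (f : R[X]) : R :=
  -(f.reverse.coeff 1 ^ 5 - 5 * f.reverse.coeff 1 ^ 3 * f.reverse.coeff 2
    + 5 * f.reverse.coeff 1 * f.reverse.coeff 2 ^ 2
    + 5 * f.reverse.coeff 1 ^ 2 * f.reverse.coeff 3
    - 5 * f.reverse.coeff 2 * f.reverse.coeff 3
    - 5 * f.reverse.coeff 1 * f.reverse.coeff 4 + 5 * f.reverse.coeff 5)

theorem coeff_reverse_mul {R : Type*} [CommRing R] [IsDomain R] (f g : R[X]) (n : ℕ) :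
    (f * g).reverse.coeff n =
      ∑ i ∈ Finset.range (n + 1), f.reverse.coeff i * g.reverse.coeff (n - i) := by
  rw [reverse_mul_of_domain, coeff_mul, Finset.Nat.sum_antidiagonal_eq_sum_range_succ_mk]

theorem coeff_zero_reverse_monic {R : Type*} [CommRing R] {f : R[X]} (hf : f.Monic) :
    f.reverse.coeff 0 = 1 := by
  rw [coeff_zero_reverse, hf.leadingCoeff]

theorem psumOne_mul {R : Type*} [CommRing R] [IsDomain R] {f g : R[X]} (hf : f.Monic)
    (hg : g.Monic) : psumOne (f * g) = psumOne f + psumOne g := by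
  simp only [psumOne, coeff_reverse_mul, Finset.sum_range_succ, Finset.sum_range_zero,
    coeff_zero_reverse_monic hf, coeff_zero_reverse_monic hg]
  simp only [Nat.sub_zero, zero_add]
  ring

theorem psumFive_mul {R : Type*} [CommRing R] [IsDomain R] {f g : R[X]} (hf : f.Monic)
    (hg : g.Monic) : psumFive (f * g) = psumFive f + psumFive g := by
  simp only [psumFive, coeff_reverse_mul, Finset.sum_range_succ, Finset.sum_range_zero,
    coeff_zero_reverse_monic hf, Nat.sub_self, Nat.sub_zero, coeff_zero_reverse_monic hg,
    Nat.reduceSub]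
  ring

theorem coeff_reverse_map {R S : Type*} [Field R] [Field S] (i : R →+* S) (f : R[X]) (n : ℕ) :
    (f.map i).reverse.coeff n = i (f.reverse.coeff n) := by
  rw [coeff_reverse, coeff_reverse, natDegree_map, coeff_map]

theorem psumOne_map {R S : Type*} [Field R] [Field S] (i : R →+* S) (f : R[X]) :
    psumOne (f.map i) = i (psumOne f) := by
  simp only [psumOne, coeff_reverse_map, map_neg]

theorem psumFive_map {R S : Type*} [Field R] [Field S] (i : R →+* S) (f : R[X]) :
    psumFive (f.map i) = i (psumFive f) := by
  simp only [psumFive, coeff_reverse_map, map_neg, map_add, map_sub, map_mul, map_pow,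
    map_ofNat]

theorem psumOne_X_sub_C {R : Type*} [CommRing R] [IsDomain R] (a : R) :
    psumOne (X - C a) = a ^ 1 := by
  simp [psumOne, coeff_reverse, revAt, coeff_X]

theorem psumFive_X_sub_C {R : Type*} [CommRing R] [IsDomain R] (a : R) :
    psumFive (X - C a) = a ^ 5 := by
  simp [psumFive, coeff_reverse, revAt, coeff_X, coeff_C]
  ring

/-- The properties that make `φ f` the sum of the `r`-th powers of the roots of a monic `f`: it is
additive on products, compatible with the corresponding function `φ'` over an extension `E`, and
`φ'` sends `X - a` to `a ^ r`. -/
structure IsPowerSum {F E : Type*} [Field F] [Field E] [Algebra F E] (r : ℕ)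
    (φ : F[X] → F) (φ' : E[X] → E) : Prop where
  mul : ∀ f g, f.Monic → g.Monic → φ (f * g) = φ f + φ g
  mul' : ∀ f g, f.Monic → g.Monic → φ' (f * g) = φ' f + φ' g
  map : ∀ f, φ' (f.map (algebraMap F E)) = algebraMap F E (φ f)
  lin : ∀ a, φ' (X - C a) = a ^ r

theorem isPowerSum_one (F E : Type*) [Field F] [Field E] [Algebra F E] :
    IsPowerSum (F := F) (E := E) 1 psumOne psumOne :=
  ⟨fun _ _ => psumOne_mul, fun _ _ => psumOne_mul, psumOne_map _, psumOne_X_sub_C⟩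

theorem isPowerSum_five (F E : Type*) [Field F] [Field E] [Algebra F E] :
    IsPowerSum (F := F) (E := E) 5 psumFive psumFive :=
  ⟨fun _ _ => psumFive_mul, fun _ _ => psumFive_mul, psumFive_map _, psumFive_X_sub_C⟩

theorem IsPowerSum.multiset {F E : Type*} [Field F] [Field E] [Algebra F E] {r : ℕ}
    {φ : F[X] → F} {φ' : E[X] → E} (h : IsPowerSum r φ φ') (s : Multiset E) :
    φ' (s.map fun a => X - C a).prod = (s.map (· ^ r)).sum := by
  induction s using Multiset.induction_on with
  | empty =>
    have := h.mul' 1 1 monic_one monic_one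
    simpa using this
  | cons a s ih =>
    rw [Multiset.map_cons, Multiset.prod_cons, Multiset.map_cons, Multiset.sum_cons,
      h.mul' _ _ (monic_X_sub_C a)
        (monic_multiset_prod_of_monic _ _ fun b _ => monic_X_sub_C b), h.lin, ih]

theorem IsPowerSum.map_one {F E : Type*} [Field F] [Field E] [Algebra F E] {r : ℕ}
    {φ : F[X] → F} {φ' : E[X] → E} (h : IsPowerSum r φ φ') : φ 1 = 0 := by
  simpa using h.mul 1 1 monic_one monic_one

open IntermediateField Module in
/-- The power sum of the minimal polynomial of `x` computes the trace of `x ^ r`. -/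
theorem IsPowerSum.trace {F : Type*} [Field F] {K : Type*} [Field K] [Algebra F K]
    [FiniteDimensional F K] [Algebra.IsSeparable F K] {r : ℕ} {φ : F[X] → F}
    {φ' : (AlgebraicClosure F)[X] → AlgebraicClosure F} (h : IsPowerSum r φ φ') (x : K) :
    Algebra.trace F K (x ^ r) = finrank F⟮x⟯ K • φ (minpoly F x) := by
  classical
  let E := AlgebraicClosure F
  have hx : IsIntegral F x := Algebra.IsIntegral.isIntegral x
  have h1 : Algebra.trace F K (x ^ r) =
      finrank F⟮x⟯ K • Algebra.trace F F⟮x⟯ (AdjoinSimple.gen F x ^ r) := by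
    rw [← Algebra.trace_trace (S := F⟮x⟯), ← map_nsmul]
    congr 1
    rw [← Algebra.trace_algebraMap (R := F⟮x⟯) (S := K), map_pow (algebraMap F⟮x⟯ K)]
    rfl
  rw [h1]
  congr 1
  apply (algebraMap F E).injective
  let pb := adjoin.powerBasis hx
  have hpb : pb.gen = AdjoinSimple.gen F x := adjoin.powerBasis_gen hx
  have hmin : minpoly F pb.gen = minpoly F x := by rw [hpb, minpoly_gen]
  have : Algebra.IsSeparable F F⟮x⟯ := Algebra.isSeparable_tower_bot_of_isSeparable F F⟮x⟯ K
  have hsep : ((minpoly F x).map (algebraMap F E)).Separable :=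
    (separable_map _).2 (Algebra.IsSeparable.isSeparable F x)
  have hroots : algebraMap F E (φ (minpoly F x)) =
      (((minpoly F x).aroots E).map (· ^ r)).sum := by
    rw [← h.map, ← h.multiset]
    congr 1
    exact (IsAlgClosed.splits _).eq_prod_roots_of_monic ((minpoly.monic hx).map _)
  rw [hroots, trace_eq_sum_embeddings E, ← hmin]
  rw [Fintype.sum_equiv pb.liftEquiv' _ (fun y => (y : E) ^ r), Finset.sum_mem_multiset,
    Finset.sum_eq_multiset_sum, Multiset.toFinset_val, Multiset.dedup_eq_self.mpr]
  · rw [hmin]; exact nodup_roots hsep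
  · intro y; rfl
  · intro σ
    rw [PowerBasis.liftEquiv'_apply_coe, map_pow, hpb]

end PowerSums

/-! ### Character weights and sums over extension fields -/

section Weights

open Polynomial

variable {F : Type*} [Field F]

/-- The weight `f ↦ χ(product of the roots) ψ(φ f)`, with `φ` a power sum of the roots. -/
noncomputable def weight (χ : MulChar F ℂ) (ψ : AddChar F ℂ) (φ : F[X] → F) (f : F[X]) : ℂ :=
  χ ((-1) ^ f.natDegree * f.coeff 0) * ψ (φ f)

theorem IsPowerSum.isWeight {E : Type*} [Field E] [Algebra F E] {r : ℕ} {φ : F[X] → F}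
    {φ' : E[X] → E} (h : IsPowerSum r φ φ') (χ : MulChar F ℂ) (ψ : AddChar F ℂ) :
    IsWeight (weight χ ψ φ) := by
  constructor
  · simp [weight, h.map_one]
  · intro f g hf hg
    rw [weight, weight, weight, hf.natDegree_mul hg, mul_coeff_zero, h.mul _ _ hf hg,
      AddChar.map_add_eq_mul, pow_add, mul_mul_mul_comm, map_mul]
    ring

variable [Fintype F]

open IntermediateField Module in
/-- The term of the prime power `P ^ j` of degree `[K : F]` in `lLog`, with `P` the minimal
polynomial of `x`, in terms of the norm and trace of `x`: their characteristic polynomial is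
`P ^ j`. -/
theorem weight_minpoly_pow {K : Type*} [Field K] [Algebra F K] [FiniteDimensional F K] {r : ℕ}
    {φ : F[X] → F} {φ' : (AlgebraicClosure F)[X] → AlgebraicClosure F}
    (h : IsPowerSum r φ φ') (χ : MulChar F ℂ) (ψ : AddChar F ℂ) (x : K) :
    weight χ ψ φ (minpoly F x) ^ (finrank F K / (minpoly F x).natDegree) =
      χ (Algebra.norm F x) * ψ (Algebra.trace F K (x ^ r)) := by
  have hx : IsIntegral F x := Algebra.IsIntegral.isIntegral x
  have hd : finrank F K / (minpoly F x).natDegree = finrank F⟮x⟯ K := by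
    rw [← adjoin.finrank hx, ← finrank_mul_finrank F F⟮x⟯ K,
      Nat.mul_div_cancel_left _ finrank_pos]
  have hn : Algebra.norm F (AdjoinSimple.gen F x) =
      (-1) ^ (minpoly F x).natDegree * (minpoly F x).coeff 0 := by
    have := Algebra.PowerBasis.norm_gen_eq_coeff_zero_minpoly (adjoin.powerBasis hx)
    rwa [adjoin.powerBasis_gen, minpoly_gen, adjoin.powerBasis_dim] at this
  rw [hd, h.trace, Algebra.norm_eq_norm_adjoin, hn, weight, mul_pow, AddChar.map_nsmul_eq_pow,
    map_pow χ]

/-- The factor `deg P` in `lLog` counts the `x` in `K` with minimal polynomial `P`; such `x` exist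
exactly when `deg P` divides `[K : F]`. -/
theorem sum_minpoly {K : Type*} [Field K] [Fintype K] [Algebra F K] (w : F[X] → ℂ) :
    lLog w (Module.finrank F K) =
      ∑ x : K, w (minpoly F x) ^ (Module.finrank F K / (minpoly F x).natDegree) := by
  classical
  have hmaps : ∀ x ∈ (Finset.univ : Finset K), minpoly F x ∈
      {P ∈ irreds F (Module.finrank F K) | P.natDegree ∣ Module.finrank F K} := by
    intro x _
    have hx : IsIntegral F x := Algebra.IsIntegral.isIntegral x
    simp only [Finset.mem_filter, mem_irreds]
    exact ⟨⟨minpoly.monic hx, minpoly.irreducible hx, minpoly.natDegree_le x⟩,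
      minpoly.degree_dvd hx⟩
  rw [← Finset.sum_fiberwise_of_maps_to hmaps, lLog]
  refine Finset.sum_congr rfl fun P hP => ?_
  simp only [Finset.mem_filter, mem_irreds] at hP
  obtain ⟨⟨hPm, hPi, -⟩, hdvd⟩ := hP
  have hfib : ({x : K | minpoly F x = P} : Finset K) = (P.rootSet K).toFinset := by
    ext x
    simp only [Finset.mem_filter, Finset.mem_univ, true_and, Set.mem_toFinset, mem_rootSet,
      ne_eq, hPm.ne_zero, not_false_eq_true]
    constructor
    · rintro rfl; exact minpoly.aeval F x
    · intro h; exact (minpoly.eq_of_irreducible_of_monic hPi h hPm).symm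
  have hsplit : (P.map (algebraMap F K)).Splits := by
    have h1 := hPi.natDegree_dvd_iff_dvd_X_pow_card_pow_sub_X.1 hdvd
    have hc : Nat.card F ^ Module.finrank F K = Fintype.card K := by
      rw [← Nat.card_eq_fintype_card (α := K), Module.natCard_eq_pow_finrank (K := F) (V := K)]
    rw [hc] at h1
    have h2 := map_dvd (mapRingHom (algebraMap F K)) h1
    simp only [coe_mapRingHom, Polynomial.map_sub, Polynomial.map_pow, map_X] at h2
    refine Splits.of_dvd ?_ (FiniteField.X_pow_card_sub_X_ne_zero K Fintype.one_lt_card) h2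
    simpa using (FiniteField.isSplittingField_sub K F).splits
  have hcard : ({x : K | minpoly F x = P} : Finset K).card = P.natDegree := by
    rw [hfib, Set.toFinset_card, card_rootSet_eq_natDegree
      (PerfectField.separable_of_irreducible hPi) hsplit]
  rw [Finset.sum_congr rfl (g := fun _ => w P ^ (Module.finrank F K / P.natDegree))
    (fun x hx => by rw [(Finset.mem_filter.1 hx).2]), Finset.sum_const, hcard, nsmul_eq_mul]

/-- The logarithmic coefficients are character sums over the extensions of `F`. -/
theorem lLog_weight {K : Type*} [Field K] [Fintype K] [Algebra F K] {r : ℕ}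
    {φ : F[X] → F} {φ' : (AlgebraicClosure F)[X] → AlgebraicClosure F}
    (h : IsPowerSum r φ φ') (χ : MulChar F ℂ) (ψ : AddChar F ℂ) :
    lLog (weight χ ψ φ) (Module.finrank F K) =
      ∑ x : K, χ (Algebra.norm F x) * ψ (Algebra.trace F K (x ^ r)) := by
  rw [sum_minpoly (K := K)]
  exact Finset.sum_congr rfl fun x _ => weight_minpoly_pow h χ ψ x

end Weights

/-! ### Counting fifth roots -/

section RootCount

open Polynomial

/-- On a cyclic group of order divisible by five, the powers of a character `η` of order five
count fifth roots. -/
theorem card_fifth_roots {K : Type*} [Field K] [Fintype K] [DecidableEq K] (η : K →* ℂ)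
    (h5 : 5 ∣ Fintype.card K - 1) (hη5 : ∀ x : Kˣ, η x ^ 5 = 1) (hη : ∃ x : Kˣ, η x ≠ 1)
    {x : K} (hx : x ≠ 0) :
    ((Finset.univ.filter fun y : K => y ^ 5 = x).card : ℂ) =
      ∑ i ∈ Finset.range 5, η x ^ i := by
  obtain ⟨g, hg⟩ := IsCyclic.exists_generator (α := Kˣ)
  have hord : orderOf g = Fintype.card K - 1 := by
    rw [orderOf_eq_card_of_forall_mem_zpowers hg, Nat.card_eq_fintype_card, Fintype.card_units]
  have hpos : 0 < Fintype.card K - 1 := Nat.sub_pos_of_lt Fintype.one_lt_card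
  obtain ⟨t, ht⟩ := h5
  have hprim : IsPrimitiveRoot ((g : K) ^ t) 5 := by
    have h1 : IsPrimitiveRoot (g : K) (Fintype.card K - 1) := by
      rw [← hord]
      exact IsPrimitiveRoot.coe_units_iff.2 (IsPrimitiveRoot.orderOf g)
    exact h1.pow hpos (by rw [ht, mul_comm])
  have hfin : Finset.univ.filter (fun y : K => y ^ 5 = x) = nthRootsFinset 5 x := by
    ext y; simp [mem_nthRootsFinset]
  have hcard := hprim.card_nthRoots x
  rw [hfin, nthRootsFinset_def, Multiset.toFinset_card_of_nodup (hprim.nthRoots_nodup hx), hcard]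
  split_ifs with h
  · obtain ⟨y, rfl⟩ := h
    have hy : y ≠ 0 := by rintro rfl; simp at hx
    have := hη5 (Units.mk0 y hy)
    simp only [Units.val_mk0] at this
    simp [map_pow, this]
  · -- If `x` is not a fifth power then `η x` is a nontrivial fifth root of unity.
    have hxe : η x ≠ 1 := by
      intro hx1
      apply h
      obtain ⟨m, hm⟩ := Submonoid.mem_powers_iff _ _ |>.1
        ((mem_powers_iff_mem_zpowers).2 (hg (Units.mk0 x hx)))
      have hxm : x = (g : K) ^ m := by
        have := congrArg Units.val hm
        simpa using this.symm
      have hg1 : η g ≠ 1 := by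
        intro hg1
        obtain ⟨z, hz⟩ := hη
        obtain ⟨n, hn⟩ := Submonoid.mem_powers_iff _ _ |>.1
          ((mem_powers_iff_mem_zpowers).2 (hg z))
        apply hz
        rw [← hn, Units.val_pow_eq_pow_val, map_pow, hg1, one_pow]
      have : Fact (Nat.Prime 5) := ⟨by norm_num⟩
      have ho : orderOf (η g) = 5 := orderOf_eq_prime (hη5 g) hg1
      rw [hxm, map_pow] at hx1
      obtain ⟨k, rfl⟩ : 5 ∣ m := ho ▸ orderOf_dvd_of_pow_eq_one hx1
      exact ⟨(g : K) ^ k, by rw [hxm, ← pow_mul, mul_comm]⟩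
    have h0 := mul_neg_geom_sum (η x) 5
    rw [show η x ^ 5 = 1 from hη5 (Units.mk0 x hx), sub_self] at h0
    rcases mul_eq_zero.1 h0 with h1 | h1
    · exact absurd (sub_eq_zero.1 h1).symm hxe
    · rw [h1]; simp

end RootCount

/-! ### The Hasse-Davenport product formula for five -/

section HasseDavenport

open Polynomial

variable {F : Type*} [Field F] [Fintype F]

omit [Fintype F] in
theorem mulChar_apply_pow_five {χ : MulChar F ℂ} (hχ5 : χ ^ 5 = 1) (x : Fˣ) :
    χ x ^ 5 = 1 := by
  rw [← MulChar.pow_apply_coe, hχ5, MulChar.one_apply_coe]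

omit [Fintype F] in
theorem mulChar_mul_pow_apply (ρ χ : MulChar F ℂ) (i : ℕ) (x : F) :
    (ρ * χ ^ i) x = ρ x * χ x ^ i := by
  rw [MulChar.mul_apply]
  by_cases hx : x = 0
  · subst hx; simp [MulChar.map_zero ρ]
  · rw [show x = ((Units.mk0 x hx : Fˣ) : F) from rfl, MulChar.pow_apply_coe]

/-- The key identity. Over the extension of degree `k`, the substitution `x = y ^ 5` turns the
sum for `ρ ^ 5` and fifth power sums into the sum over the five twists of `ρ` by powers of `χ`. -/
theorem lLog_psumFive {ρ χ : MulChar F ℂ} (hχ : χ ≠ 1) (hχ5 : χ ^ 5 = 1) (ψ : AddChar F ℂ)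
    {k : ℕ} (hk : k ≠ 0) :
    lLog (weight (ρ ^ 5) ψ psumFive) k =
      ∑ i ∈ Finset.range 5, lLog (weight (ρ * χ ^ i) ψ psumOne) k := by
  classical
  obtain ⟨p, hp⟩ := CharP.exists F
  have : Fact p.Prime := ⟨CharP.char_is_prime F p⟩
  have : NeZero k := ⟨hk⟩
  let K := FiniteField.Extension F p k
  have : Fintype K := Fintype.ofFinite K
  have hfin : Module.finrank F K = k := FiniteField.finrank_extension F p k
  have e5 := lLog_weight (K := K) (isPowerSum_five F (AlgebraicClosure F)) (ρ ^ 5) ψ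
  have e1 := fun i : ℕ => lLog_weight (K := K) (isPowerSum_one F (AlgebraicClosure F))
    (ρ * χ ^ i) ψ
  rw [hfin] at e5 e1
  rw [e5, Finset.sum_congr rfl fun i _ => e1 i, Finset.sum_comm]
  have : Fact (Nat.Prime 5) := ⟨by norm_num⟩
  have hord : orderOf χ = 5 := orderOf_eq_prime hχ5 hχ
  have h5F : 5 ∣ Fintype.card F - 1 := hord ▸ χ.orderOf_dvd_card_sub_one
  have h5K : 5 ∣ Fintype.card K - 1 := by
    have hc : Fintype.card K = Fintype.card F ^ k := by
      rw [← Nat.card_eq_fintype_card, FiniteField.natCard_extension, Nat.card_eq_fintype_card]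
    rw [hc]
    exact h5F.trans (by simpa using Nat.sub_dvd_pow_sub_pow (Fintype.card F) 1 k)
  -- The lift of `χ` to `K`; it is nontrivial because the norm is surjective.
  let η : K →* ℂ := χ.toMonoidHom.comp (Algebra.norm F)
  have hη : ∀ x, η x = χ (Algebra.norm F x) := fun x => rfl
  have hcount : ∀ x : K, x ≠ 0 → ((Finset.univ.filter fun y : K => y ^ 5 = x).card : ℂ) =
      ∑ i ∈ Finset.range 5, η x ^ i := by
    intro x hx
    refine card_fifth_roots η h5K ?_ ?_ hx
    · intro y
      have hy : Algebra.norm F (y : K) ≠ 0 := Algebra.norm_ne_zero_iff.2 y.ne_zero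
      exact mulChar_apply_pow_five hχ5 (Units.mk0 _ hy)
    · obtain ⟨a, ha⟩ := MulChar.ne_one_iff.1 hχ
      obtain ⟨y, hy⟩ := FiniteField.norm_surjective F K (a : F)
      have hy0 : y ≠ 0 := by
        rintro rfl
        rw [Algebra.norm_zero] at hy
        exact a.ne_zero hy.symm
      exact ⟨Units.mk0 y hy0, by rw [hη, Units.val_mk0, hy]; exact ha⟩
  rw [← Finset.sum_fiberwise_of_maps_to (s := Finset.univ) (t := Finset.univ)
    (g := fun y : K => y ^ 5) (fun _ _ => Finset.mem_univ _)]
  refine Finset.sum_congr rfl fun x _ => ?_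
  have hfib : ∀ y ∈ (Finset.univ.filter fun y : K => y ^ 5 = x),
      (ρ ^ 5) (Algebra.norm F y) * ψ (Algebra.trace F K (y ^ 5)) =
        ρ (Algebra.norm F x) * ψ (Algebra.trace F K x) := by
    intro y hy
    rw [(Finset.mem_filter.1 hy).2.symm, MulChar.pow_apply' _ (by norm_num),
      map_pow (Algebra.norm F), map_pow ρ]
  rw [Finset.sum_congr rfl hfib, Finset.sum_const, nsmul_eq_mul]
  simp only [pow_one, mulChar_mul_pow_apply]
  by_cases hx : x = 0
  · subst hx
    simp [Algebra.norm_zero, MulChar.map_zero ρ]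
  · rw [hcount x hx, Finset.sum_mul]
    exact Finset.sum_congr rfl fun i _ => by rw [hη]; ring

theorem natDegree_tail {n : ℕ} (a : Fin n → F) :
    (X ^ n + ∑ i : Fin n, C (a i) * X ^ (i : ℕ)).natDegree = n := by
  classical
  exact (mem_monics.1 (Finset.mem_image.2 ⟨a, Finset.mem_univ _, rfl⟩ : _ ∈ monics F n)).2

theorem coeff_reverse_tail {n : ℕ} (a : Fin n → F) {k : ℕ} (hk : 0 < k) (hkn : k ≤ n) :
    (X ^ n + ∑ i : Fin n, C (a i) * X ^ (i : ℕ)).reverse.coeff k = a ⟨n - k, by omega⟩ := by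
  rw [coeff_reverse, natDegree_tail, revAt_le hkn]
  exact coeff_tail a ⟨n - k, by omega⟩

theorem lCoeff_zero (w : F[X] → ℂ) (hw : IsWeight w) : lCoeff w 0 = 1 := by
  simp [lCoeff, sum_monics, hw.map_one]

theorem lCoeff_one (χ : MulChar F ℂ) (ψ : AddChar F ℂ) :
    lCoeff (weight χ ψ psumOne) 1 = gaussSum χ ψ := by
  rw [lCoeff, sum_monics, gaussSum]
  refine Fintype.sum_equiv ((Equiv.funUnique (Fin 1) F).trans (Equiv.neg F)) _ _ fun a => ?_
  have h0 := coeff_tail a 0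
  rw [weight, psumOne, coeff_reverse_tail a one_pos le_rfl, natDegree_tail]
  rw [Fin.val_zero] at h0
  rw [h0]
  simp

/-- The Gauss sum L-function is linear: in degree at least two the constant term and the
second-highest coefficient are independent, and `ψ` sums to zero over the latter. -/
theorem lCoeff_of_two_le (χ : MulChar F ℂ) {ψ : AddChar F ℂ} (hψ : ψ ≠ 1) {n : ℕ} (hn : 2 ≤ n) :
    lCoeff (weight χ ψ psumOne) n = 0 := by
  obtain ⟨c, hc⟩ := AddChar.ne_one_iff.1 hψ
  rw [lCoeff, sum_monics]
  have hw : ∀ a : Fin n → F,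
      weight χ ψ psumOne (X ^ n + ∑ i : Fin n, C (a i) * X ^ (i : ℕ)) =
        χ ((-1) ^ n * a ⟨0, by omega⟩) * ψ (-a ⟨n - 1, by omega⟩) := by
    intro a
    rw [weight, psumOne, coeff_reverse_tail a one_pos (by omega), natDegree_tail]
    congr 3
    exact coeff_tail a ⟨0, by omega⟩
  simp only [hw]
  set S := ∑ a : Fin n → F, χ ((-1) ^ n * a ⟨0, by omega⟩) * ψ (-a ⟨n - 1, by omega⟩) with hS
  have hshift : S = ψ c * S := by
    conv_lhs => rw [hS]
    rw [hS, Finset.mul_sum]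
    refine Fintype.sum_equiv
      (Equiv.addRight (Pi.single (⟨n - 1, by omega⟩ : Fin n) c)) _ _ fun a => ?_
    have h0 : (⟨0, by omega⟩ : Fin n) ≠ ⟨n - 1, by omega⟩ := by
      intro h; have := congrArg Fin.val h; simp at this; omega
    simp only [Equiv.coe_addRight, Pi.add_apply, Pi.single_eq_same, Pi.single_eq_of_ne h0,
      add_zero, neg_add, AddChar.map_add_eq_mul]
    have : ψ c * ψ (-c) = 1 := by rw [← AddChar.map_add_eq_mul, add_neg_cancel, ψ.map_zero_eq_one]
    linear_combination (-(χ ((-1) ^ n * a ⟨0, by omega⟩) * ψ (-a ⟨n - 1, by omega⟩))) * this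
  have : (ψ c - 1) * S = 0 := by linear_combination -hshift
  exact (mul_eq_zero.1 this).resolve_left (sub_ne_zero.2 hc)

/-- Only the constant term `a 0` of a quintic meets `χ`, and it enters the fifth power sum through
the term `-5 * a 0` alone, so the sum over quintics is a Gauss sum times a factor free of `χ`. -/
theorem exists_lCoeff_five (ψ : AddChar F ℂ) (h5 : (5 : F) ≠ 0) :
    ∃ c : ℂ, ∀ χ : MulChar F ℂ,
      lCoeff (weight χ ψ psumFive) 5 = c * (χ⁻¹ 5 * gaussSum χ ψ) := by
  refine ⟨∑ b : Fin 4 → F, ψ (-(b 3 ^ 5 - 5 * b 3 ^ 3 * b 2 + 5 * b 3 * b 2 ^ 2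
    + 5 * b 3 ^ 2 * b 1 - 5 * b 2 * b 1 - 5 * b 3 * b 0)), fun χ => ?_⟩
  have hg : χ⁻¹ 5 * gaussSum χ ψ = ∑ x : F, χ (-x) * ψ (-(5 * x)) := by
    have h1 := gaussSum_mulShift χ ψ (Units.mk0 5 h5)
    have h2 : χ⁻¹ 5 * χ 5 = 1 := by
      rw [← MulChar.mul_apply, inv_mul_cancel]
      exact MulChar.one_apply (IsUnit.mk0 _ h5)
    simp only [Units.val_mk0] at h1
    rw [← h1, ← mul_assoc, h2, one_mul, gaussSum]
    refine Fintype.sum_equiv (Equiv.neg F) _ _ fun x => ?_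
    simp [AddChar.mulShift_apply]
  rw [hg, lCoeff, sum_monics, ← (Fin.consEquiv fun _ : Fin 5 => F).sum_comp,
    Fintype.sum_prod_type, mul_comm, Finset.sum_mul]
  refine Finset.sum_congr rfl fun x _ => ?_
  rw [Finset.mul_sum]
  refine Finset.sum_congr rfl fun b _ => ?_
  have h0 := coeff_tail (Fin.cons x b : Fin 5 → F) 0
  rw [Fin.val_zero] at h0
  change weight χ ψ psumFive
    (X ^ 5 + ∑ i : Fin 5, C ((Fin.cons x b : Fin 5 → F) i) * X ^ (i : ℕ)) = _
  rw [weight, psumFive, natDegree_tail, h0,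
    coeff_reverse_tail _ (by norm_num) (by norm_num),
    coeff_reverse_tail _ (by norm_num) (by norm_num),
    coeff_reverse_tail _ (by norm_num) (by norm_num),
    coeff_reverse_tail _ (by norm_num) (by norm_num),
    coeff_reverse_tail _ (by norm_num) (by norm_num)]
  have e4 : (Fin.cons x b : Fin 5 → F) ⟨5 - 1, by omega⟩ = b 3 := rfl
  have e3 : (Fin.cons x b : Fin 5 → F) ⟨5 - 2, by omega⟩ = b 2 := rfl
  have e2 : (Fin.cons x b : Fin 5 → F) ⟨5 - 3, by omega⟩ = b 1 := rfl
  have e1 : (Fin.cons x b : Fin 5 → F) ⟨5 - 4, by omega⟩ = b 0 := rfl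
  have e0 : (Fin.cons x b : Fin 5 → F) ⟨5 - 5, by omega⟩ = x := rfl
  rw [e4, e3, e2, e1, e0, mul_assoc (χ (-x)), ← AddChar.map_add_eq_mul, Fin.cons_zero]
  congr 2
  · ring
  · ring

/-- Up to degree five, `lLog` of the weight of `ρ ^ 5` is that of `∏ (1 + g i * u)`, where `g i` is
the Gauss sum of `ρ * χ ^ i`. Hence the coefficients up to `u ^ 5` are the elementary symmetric
functions of the `g i`, and the one of `u ^ 5` is their product. -/
theorem prod_gaussSum_eq_lCoeff {ρ χ : MulChar F ℂ} (hχ : χ ≠ 1) (hχ5 : χ ^ 5 = 1)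
    {ψ : AddChar F ℂ} (hψ : ψ ≠ 1) :
    ∏ i ∈ Finset.range 5, gaussSum (ρ * χ ^ i) ψ = lCoeff (weight (ρ ^ 5) ψ psumFive) 5 := by
  have hW5 := (isPowerSum_five F (AlgebraicClosure F)).isWeight (ρ ^ 5) ψ
  -- The L-function of each twist is `1 + g i * u`.
  have hlog : ∀ i, ∀ k ∈ Finset.Icc 1 5, lLog (weight (ρ * χ ^ i) ψ psumOne) k =
      -(-gaussSum (ρ * χ ^ i) ψ) ^ k := by
    intro i
    have hW := (isPowerSum_one F (AlgebraicClosure F)).isWeight (ρ * χ ^ i) ψ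
    have h := mul_lCoeff hW
    have c0 := lCoeff_zero _ hW
    have c1 := lCoeff_one (ρ * χ ^ i) ψ
    have cn := fun n (hn : 2 ≤ n) => lCoeff_of_two_le (ρ * χ ^ i) hψ hn
    generalize hw : weight (ρ * χ ^ i) ψ psumOne = w at *
    have n1 := h 1
    have n2 := h 2
    have n3 := h 3
    have n4 := h 4
    have n5 := h 5
    simp [Finset.sum_Icc_succ_top, c0, c1, cn] at n1 n2 n3 n4 n5
    set g := gaussSum (ρ * χ ^ i) ψ
    have m1 : lLog w 1 = g := n1.symm
    have m2 : lLog w 2 = -g ^ 2 := by linear_combination -n2 - g * m1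
    have m3 : lLog w 3 = g ^ 3 := by linear_combination -n3 - g * m2
    have m4 : lLog w 4 = -g ^ 4 := by linear_combination -n4 - g * m3
    have m5 : lLog w 5 = g ^ 5 := by linear_combination -n5 - g * m4
    intro k hk
    rw [Finset.mem_Icc] at hk
    obtain ⟨hk1, hk2⟩ := hk
    interval_cases k
    · rw [m1]; ring
    · rw [m2]; ring
    · rw [m3]; ring
    · rw [m4]; ring
    · rw [m5]; ring
  have h := mul_lCoeff hW5
  have c0 := lCoeff_zero _ hW5
  have hS : ∀ k ∈ Finset.Icc 1 5, lLog (weight (ρ ^ 5) ψ psumFive) k =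
      ∑ i ∈ Finset.range 5, -(-gaussSum (ρ * χ ^ i) ψ) ^ k := by
    intro k hk
    rw [lLog_psumFive hχ hχ5 ψ (by rw [Finset.mem_Icc] at hk; omega)]
    exact Finset.sum_congr rfl fun i _ => hlog i k hk
  generalize weight (ρ ^ 5) ψ psumFive = w at *
  have s1 := hS 1 (by simp)
  have s2 := hS 2 (by simp)
  have s3 := hS 3 (by simp)
  have s4 := hS 4 (by simp)
  have s5 := hS 5 (by simp)
  have n1 := h 1
  have n2 := h 2
  have n3 := h 3
  have n4 := h 4
  have n5 := h 5
  simp [Finset.sum_Icc_succ_top, c0] at n1 n2 n3 n4 n5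
  simp only [Finset.prod_range_succ, Finset.prod_range_zero, one_mul]
  simp only [Finset.sum_range_succ, Finset.sum_range_zero, zero_add] at s1 s2 s3 s4 s5
  generalize gaussSum (ρ * χ ^ 0) ψ = g₀ at *
  generalize gaussSum (ρ * χ ^ 1) ψ = g₁ at *
  generalize gaussSum (ρ * χ ^ 2) ψ = g₂ at *
  generalize gaussSum (ρ * χ ^ 3) ψ = g₃ at *
  generalize gaussSum (ρ * χ ^ 4) ψ = g₄ at *
  -- Newton's identities, solved degree by degree.
  have m1 : lCoeff w 1 = g₀ + g₁ + g₂ + g₃ + g₄ := by linear_combination n1 + s1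
  have m2 : lCoeff w 2 = g₀ * g₁ + g₀ * g₂ + g₀ * g₃ + g₀ * g₄ + g₁ * g₂ + g₁ * g₃ + g₁ * g₄
      + g₂ * g₃ + g₂ * g₄ + g₃ * g₄ := by
    rw [s1, s2, m1] at n2
    linear_combination n2 / 2
  have m3 : lCoeff w 3 = g₀ * g₁ * g₂ + g₀ * g₁ * g₃ + g₀ * g₁ * g₄ + g₀ * g₂ * g₃ + g₀ * g₂ * g₄
      + g₀ * g₃ * g₄ + g₁ * g₂ * g₃ + g₁ * g₂ * g₄ + g₁ * g₃ * g₄ + g₂ * g₃ * g₄ := by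
    rw [s1, s2, s3, m1, m2] at n3
    linear_combination n3 / 3
  have m4 : lCoeff w 4 = g₀ * g₁ * g₂ * g₃ + g₀ * g₁ * g₂ * g₄ + g₀ * g₁ * g₃ * g₄
      + g₀ * g₂ * g₃ * g₄ + g₁ * g₂ * g₃ * g₄ := by
    rw [s1, s2, s3, s4, m1, m2, m3] at n4
    linear_combination n4 / 4
  rw [s1, s2, s3, s4, s5, m1, m2, m3, m4] at n5
  linear_combination -n5 / 5

/-- The Hasse-Davenport product formula for five, with the product of the Gauss sums of the
nontrivial powers of `χ` evaluated as `q ^ 2`. -/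
theorem hasse_davenport_five {χ : MulChar F ℂ} (ρ : MulChar F ℂ) (hχ : χ ≠ 1) (hχ5 : χ ^ 5 = 1)
    {ψ : AddChar F ℂ} (hψ : ψ ≠ 1) (h5 : (5 : F) ≠ 0) :
    ∏ i ∈ Finset.range 5, gaussSum (ρ * χ ^ i) ψ =
      (Fintype.card F : ℂ) ^ 2 * ((ρ ^ 5)⁻¹ 5 * gaussSum (ρ ^ 5) ψ) := by
  obtain ⟨c, hc⟩ := exists_lCoeff_five ψ h5
  -- The constant `c` does not depend on `ρ`; the case `ρ = 1` shows that it is `q ^ 2`.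
  have h1 := prod_gaussSum_eq_lCoeff (ρ := 1) hχ hχ5 hψ
  rw [prod_gaussSum_eq_lCoeff hχ hχ5 hψ, hc]
  congr 1
  rw [hc] at h1
  have hone : (1 : MulChar F ℂ) 5 = 1 := MulChar.one_apply (IsUnit.mk0 _ h5)
  simp only [one_mul, one_pow, inv_one, hone, Finset.prod_range_succ, Finset.prod_range_zero,
    pow_zero, pow_one, gaussSum_one_left hψ] at h1
  have hχn1 : χ (-1) = 1 := MulChar.val_neg_one_eq_one_of_odd_order (n := 5) (by decide) hχ5
  have hprim := AddChar.IsPrimitive.of_ne_one hψ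
  have hpair : ∀ i j, i + j = 5 → χ ^ i ≠ 1 →
      gaussSum (χ ^ i) ψ * gaussSum (χ ^ j) ψ = Fintype.card F := by
    intro i j hij hi
    have hinv : χ ^ j = (χ ^ i)⁻¹ := by
      rw [eq_inv_iff_mul_eq_one, ← pow_add, add_comm, hij, hχ5]
    have hin : (χ ^ i)⁻¹ (-1) = 1 := by
      rw [← hinv, ← Units.val_one, ← Units.val_neg, MulChar.pow_apply_coe, Units.val_neg,
        Units.val_one, hχn1, one_pow]
    have := gaussSum_mul_gaussSum_eq_card hi hprim
    rw [hinv, ← this, ← mul_gaussSum_inv_eq_gaussSum (χ ^ i)⁻¹ ψ, hin, one_mul]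
  have hχ2 : χ ^ 2 ≠ 1 := by
    intro h
    have : Fact (Nat.Prime 5) := ⟨by norm_num⟩
    have ho : orderOf χ = 5 := orderOf_eq_prime hχ5 hχ
    have := orderOf_dvd_of_pow_eq_one h
    rw [ho] at this
    omega
  have p1 := hpair 1 4 rfl (by rwa [pow_one])
  have p2 := hpair 2 3 rfl hχ2
  rw [pow_one] at p1
  linear_combination h1 + gaussSum (χ ^ 2) ψ * gaussSum (χ ^ 3) ψ * p1 + Fintype.card F * p2

end HasseDavenport

/-! ### The sum over characters -/

theorem stmt15 {F : Type*} [Field F] [Fintype F] [DecidableEq F]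
    (ψ : AddChar F ℂ) (hψ : ψ ≠ 1)
    (q : ℕ) (hq : q = Fintype.card F) (hq5 : q % 5 = 1)
    (t : ℕ) (ht : t = (q - 1) / 5)
    (T : MulChar F ℂ) (hT : ∀ χ : MulChar F ℂ, ∃ k : ℕ, χ = T ^ k)
    (lam : F) (hlam : lam ≠ 0) :
    (∑ j ∈ Finset.range (q - 1),
        gaussSum (T ^ j) ψ * gaussSum (T ^ (t + j)) ψ * gaussSum (T ^ (2 * t + j)) ψ *
            gaussSum (T ^ (3 * t + j)) ψ * gaussSum (T ^ (4 * t + j)) ψ /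
          gaussSum (T ^ (5 * j)) ψ * (T ^ (5 * j)) (5 * lam)
      = (q : ℂ) ^ 2 * ∑ j ∈ Finset.range (q - 1), (T ^ (5 * j)) lam) ∧
    (∑ j ∈ Finset.range (q - 1),
        gaussSum (T ^ j) ψ * gaussSum (T ^ (t + j)) ψ * gaussSum (T ^ (2 * t + j)) ψ *
            gaussSum (T ^ (3 * t + j)) ψ * gaussSum (T ^ (4 * t + j)) ψ /
          gaussSum (T ^ (5 * j)) ψ * (T ^ (5 * j)) (5 * lam)
      = if lam ^ 5 = 1 then (q : ℂ) ^ 2 * ((q : ℂ) - 1) else 0) := by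
  have hq1 : 1 < q := hq ▸ Fintype.one_lt_card
  have hqt : q - 1 = 5 * t := by omega
  have htpos : 0 < t := by omega
  have h5 : (5 : F) ≠ 0 := by
    intro h
    have hd : ringChar F ∣ 5 := ringChar.dvd (by exact_mod_cast h)
    have hp : (ringChar F).Prime := CharP.char_is_prime F _
    have h5' : ringChar F = 5 := (Nat.prime_dvd_prime_iff_eq hp (by norm_num)).1 hd
    obtain ⟨n, _, hn⟩ := FiniteField.card F (ringChar F)
    have : 5 ∣ q := by
      rw [hq, hn, h5']
      exact dvd_pow_self 5 n.ne_zero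
    omega
  have hTpow : T ^ (q - 1) = 1 := by
    rw [hq, ← Fintype.card_units]
    exact MulChar.pow_card_eq_one T
  have hTord : orderOf T = q - 1 := by
    obtain ⟨χ, hχ⟩ := MulChar.exists_mulChar_orderOf_eq_card_units F
      (Complex.isPrimitiveRoot_exp _ (Fintype.card_ne_zero (α := Fˣ)))
    obtain ⟨k, rfl⟩ := hT χ
    refine Nat.dvd_antisymm (orderOf_dvd_of_pow_eq_one hTpow) ?_
    rw [hq, ← Fintype.card_units, ← hχ]
    exact orderOf_pow_dvd k
  have hχ5 : (T ^ t) ^ 5 = 1 := by rw [← pow_mul, mul_comm, ← hqt, hTpow]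
  have hχ : T ^ t ≠ 1 := pow_ne_one_of_lt_orderOf htpos.ne' (by omega)
  have hfirst : ∑ j ∈ Finset.range (q - 1),
        gaussSum (T ^ j) ψ * gaussSum (T ^ (t + j)) ψ * gaussSum (T ^ (2 * t + j)) ψ *
            gaussSum (T ^ (3 * t + j)) ψ * gaussSum (T ^ (4 * t + j)) ψ /
          gaussSum (T ^ (5 * j)) ψ * (T ^ (5 * j)) (5 * lam)
      = (q : ℂ) ^ 2 * ∑ j ∈ Finset.range (q - 1), (T ^ (5 * j)) lam := by
    rw [Finset.mul_sum]
    refine Finset.sum_congr rfl fun j _ => ?_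
    have hHD := hasse_davenport_five (T ^ j) hχ hχ5 hψ h5
    have htw : ∀ i, T ^ j * (T ^ t) ^ i = T ^ (i * t + j) := fun i => by
      rw [← pow_mul, ← pow_add]; ring_nf
    simp only [Finset.prod_range_succ, Finset.prod_range_zero, one_mul, htw, ← hq, zero_mul,
      zero_add] at hHD
    rw [← pow_mul, mul_comm j 5] at hHD
    have hg : gaussSum (T ^ (5 * j)) ψ ≠ 0 := by
      by_cases h : T ^ (5 * j) = 1
      · rw [h, gaussSum_one_left hψ]; norm_num
      · exact gaussSum_ne_zero_of_nontrivial (by exact_mod_cast Fintype.card_ne_zero) h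
          (AddChar.IsPrimitive.of_ne_one hψ)
    have hinv : (T ^ (5 * j))⁻¹ 5 * (T ^ (5 * j)) 5 = 1 := by
      rw [← MulChar.mul_apply, inv_mul_cancel]
      exact MulChar.one_apply (IsUnit.mk0 _ h5)
    rw [hHD, map_mul, mul_div_assoc, mul_div_cancel_right₀ _ hg]
    linear_combination (q : ℂ) ^ 2 * (T ^ (5 * j)) lam * hinv
  refine ⟨hfirst, hfirst.trans ?_⟩
  have hpow : ∀ j, (T ^ (5 * j)) lam = T (lam ^ 5) ^ j := fun j => by
    have := MulChar.pow_apply_coe T (5 * j) (Units.mk0 lam hlam)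
    rw [Units.val_mk0] at this
    rw [this, map_pow, pow_mul]
  simp only [hpow]
  split_ifs with h
  · rw [h, map_one]
    simp [Nat.cast_sub hq1.le]
  · -- Every character is a power of `T`, so `T` separates `lam ^ 5` from `1`.
    have hT1 : T (lam ^ 5) ≠ 1 := by
      intro h1
      obtain ⟨χ, hχ⟩ := MulChar.exists_apply_ne_one_of_hasEnoughRootsOfUnity F ℂ h
      obtain ⟨k, rfl⟩ := hT χ
      apply hχ
      have := MulChar.pow_apply_coe T k (Units.mk0 (lam ^ 5) (pow_ne_zero 5 hlam))
      rw [Units.val_mk0] at this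
      rw [this, h1, one_pow]
    have hTq : T (lam ^ 5) ^ (q - 1) = 1 := by
      rw [← map_pow, hq, FiniteField.pow_card_sub_one_eq_one _ (pow_ne_zero 5 hlam), map_one]
    rw [geom_sum_eq hT1, hTq, sub_self, zero_div, mul_zero]
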